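/- In the online Ramsey game with targets red C₄ and blue P₆, consider the position in which the five edges v₁v₂, v₂v₃, v₃v₄, v₄v₅, v₅v₆ of a path on six distinct vertices have been colored red, blue, red, blue, red respectively (case R9). From this position Builder can force a red copy of C₄ or a blue copy of P₆ within at most 6 additional rounds, so within at most 11 rounds in total. -/

import Mathlib

open SimpleGraph

/-- The set `S` of edges of the infinite complete graph on `ℕ` contains a copy of
the graph `G`: there is an injective map of the vertices of `G` into `ℕ` sending
every edge of `G` into `S`. -/
def HasCopy {V : Type*} (G : SimpleGraph V) (S : Set (Sym2 ℕ)) : Prop :=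
  ∃ f : V → ℕ, Function.Injective f ∧ ∀ a b, G.Adj a b → s(f a, f b) ∈ S

/-- `BuilderWinsIn G H R B r` means: in the online Ramsey game with targets a red copy
of `G` and a blue copy of `H`, from the position in which the edges in `R` have been
colored red and the edges in `B` have been colored blue, Builder has a strategy that
guarantees, against every Painter strategy, that within at most `r` further rounds the
colored edges contain a red copy of `G` or a blue copy of `H`.  (In each round Builder
chooses a previously unchosen non-loop edge of the infinite complete graph on `ℕ`, and
Painter immediately colors it red or blue; so Builder wins within `r + 1` rounds iff he
has already won, or he can choose an edge such that whichever color Painter gives it,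
he can win within `r` further rounds.) -/
def BuilderWinsIn {V W : Type*} (G : SimpleGraph V) (H : SimpleGraph W) :
    Set (Sym2 ℕ) → Set (Sym2 ℕ) → ℕ → Prop
  | R, B, 0 => HasCopy G R ∨ HasCopy H B
  | R, B, (r + 1) => HasCopy G R ∨ HasCopy H B ∨
      ∃ e : Sym2 ℕ, ¬ e.IsDiag ∧ e ∉ R ∧ e ∉ B ∧
        BuilderWinsIn G H (insert e R) B r ∧ BuilderWinsIn G H R (insert e B) r

/-- The online size Ramsey number `ř(G, H)`: the least `t` such that, starting from the
empty position, Builder can force a red copy of `G` or a blue copy of `H` within at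
most `t` rounds. -/
noncomputable def onlineRamsey {V W : Type*} (G : SimpleGraph V) (H : SimpleGraph W) : ℕ :=
  sInf {t | BuilderWinsIn G H ∅ ∅ t}

/-!
If Builder is to force a red `C₄` or a blue path on `n + 2` vertices, then a blue path `p₀ … pₙ`
wins for him in four rounds: Painter must color every edge from an endpoint to a vertex off the
path red, hence also `pₙq`, `p₀q` and `p₀x` for two vertices `q` and `x` off the path, and then
`pₙx` completes the red cycle `p₀qpₙx` or a longer blue path.

In case R9 Builder starts with `v₁v₅`. Two of Painter's replies give him a blue `P₅` with enough
rounds left; in the two remaining lines every further move of Painter is forced, until one edge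
would complete both a red `C₄` and a blue `P₆`.
-/

section Game

variable {V W : Type*} {G : SimpleGraph V} {H : SimpleGraph W} {R B : Set (Sym2 ℕ)} {r : ℕ}

theorem HasCopy.builderWinsIn_of_red (h : HasCopy G R) : BuilderWinsIn G H R B r := by
  cases r with
  | zero => exact Or.inl h
  | succ r => exact Or.inl h

theorem HasCopy.builderWinsIn_of_blue (h : HasCopy H B) : BuilderWinsIn G H R B r := by
  cases r with
  | zero => exact Or.inr h
  | succ r => exact Or.inr (Or.inl h)

theorem BuilderWinsIn.succ (h : BuilderWinsIn G H R B r) : BuilderWinsIn G H R B (r + 1) := by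
  induction r generalizing R B with
  | zero => exact h.elim HasCopy.builderWinsIn_of_red HasCopy.builderWinsIn_of_blue
  | succ r ih =>
    obtain hR | hB | ⟨e, he, heR, heB, hred, hblue⟩ := h
    · exact hR.builderWinsIn_of_red
    · exact hB.builderWinsIn_of_blue
    · exact Or.inr (Or.inr ⟨e, he, heR, heB, ih hred, ih hblue⟩)

-- The edge need not be new: if it already has a color, one of the two replies changes nothing.
theorem BuilderWinsIn.of_edge {a b : ℕ} (hab : a ≠ b)
    (hred : BuilderWinsIn G H (insert s(a, b) R) B r)
    (hblue : BuilderWinsIn G H R (insert s(a, b) B) r) : BuilderWinsIn G H R B (r + 1) := by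
  by_cases hR : s(a, b) ∈ R
  · exact (Set.insert_eq_of_mem hR ▸ hred).succ
  by_cases hB : s(a, b) ∈ B
  · exact (Set.insert_eq_of_mem hB ▸ hblue).succ
  exact Or.inr (Or.inr ⟨s(a, b), by simpa using hab, hR, hB, hred, hblue⟩)

theorem BuilderWinsIn.of_forced_blue {a b : ℕ} (hab : a ≠ b)
    (hred : HasCopy G (insert s(a, b) R))
    (hblue : BuilderWinsIn G H R (insert s(a, b) B) r) : BuilderWinsIn G H R B (r + 1) :=
  .of_edge hab hred.builderWinsIn_of_red hblue

theorem BuilderWinsIn.of_forced_red {a b : ℕ} (hab : a ≠ b)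
    (hblue : HasCopy H (insert s(a, b) B))
    (hred : BuilderWinsIn G H (insert s(a, b) R) B r) : BuilderWinsIn G H R B (r + 1) :=
  .of_edge hab hred hblue.builderWinsIn_of_blue

end Game

section Copies

variable {S : Set (Sym2 ℕ)} {n : ℕ}

theorem hasCopy_cycleGraph {c : Fin (n + 2) → ℕ} (hc : Function.Injective c)
    (hmem : ∀ i, s(c i, c (i + 1)) ∈ S) : HasCopy (cycleGraph (n + 2)) S := by
  refine ⟨c, hc, fun i j hij ↦ ?_⟩
  rw [cycleGraph_adj, sub_eq_iff_eq_add', sub_eq_iff_eq_add'] at hij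
  obtain rfl | rfl := hij
  · exact Sym2.eq_swap ▸ hmem j
  · exact hmem i

/-- The vertices `p 0, …, p n` are distinct and form, in this order, a path all of whose edges
belong to `S`; so `p` is the map exhibiting a copy of `pathGraph (n + 1)` in `S`, written as a
sequence in order to be extended at either end. -/
structure IsPathIn (S : Set (Sym2 ℕ)) (p : Fin (n + 1) → ℕ) : Prop where
  injective : Function.Injective p
  edge_mem (i : Fin n) : s(p i.castSucc, p i.succ) ∈ S

namespace IsPathIn

variable {p : Fin (n + 1) → ℕ} {q : ℕ}

theorem hasCopy (hp : IsPathIn S p) : HasCopy (pathGraph (n + 1)) S := by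
  have hsucc (i j : Fin (n + 1)) (hij : (i : ℕ) + 1 = j) : s(p i, p j) ∈ S := by
    obtain ⟨k, rfl⟩ : ∃ k : Fin n, k.castSucc = i := ⟨⟨i, by omega⟩, rfl⟩
    obtain rfl : k.succ = j := Fin.ext hij
    exact hp.edge_mem k
  refine ⟨p, hp.injective, fun i j hij ↦ ?_⟩
  obtain hij | hji := pathGraph_adj.1 hij
  · exact hsucc i j hij
  · rw [Sym2.eq_swap]
    exact hsucc j i hji

theorem cons (hp : IsPathIn S p) (hq : q ∉ Set.range p) :
    IsPathIn (insert s(p 0, q) S) (Fin.cons q p : Fin (n + 2) → ℕ) where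
  injective := Fin.cons_injective_iff.2 ⟨hq, hp.injective⟩
  edge_mem i := by
    cases i using Fin.cases with
    | zero => simp [Sym2.eq_swap]
    | succ i => simpa using Or.inr (hp.edge_mem i)

theorem snoc (hp : IsPathIn S p) (hq : q ∉ Set.range p) :
    IsPathIn (insert s(p (Fin.last n), q) S) (Fin.snoc p q : Fin (n + 2) → ℕ) where
  injective := Fin.snoc_injective_iff.2 ⟨hp.injective, hq⟩
  edge_mem i := by
    cases i using Fin.lastCases with
    | last => simp
    | cast i =>
      rw [Fin.succ_castSucc, Fin.snoc_castSucc, Fin.snoc_castSucc]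
      exact Set.mem_insert_of_mem _ (hp.edge_mem i)

end IsPathIn

end Copies

section Forcing

variable {R B : Set (Sym2 ℕ)} {n r : ℕ}

theorem BuilderWinsIn.of_red_path {W : Type*} {H : SimpleGraph W} (a b c d : ℕ)
    (hnodup : [a, b, c, d].Nodup) (hab : s(a, b) ∈ R) (hbc : s(b, c) ∈ R) (hcd : s(c, d) ∈ R)
    (hblue : BuilderWinsIn (cycleGraph 4) H R (insert s(a, d) B) r) :
    BuilderWinsIn (cycleGraph 4) H R B (r + 1) := by
  have had : a ≠ d := by rintro rfl; simp at hnodup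
  refine .of_forced_blue had ?_ hblue
  refine hasCopy_cycleGraph (List.nodup_iff_injective_get.1 hnodup) (Fin.forall_fin_succ.2 ?_)
  simp [Fin.forall_fin_succ, hab, hbc, hcd, Sym2.eq_swap]

variable {p : Fin (n + 2) → ℕ} {q : ℕ}

theorem IsPathIn.builderWinsIn_three_of_red_pendant (hp : IsPathIn B p) (hq : q ∉ Set.range p)
    (hred : s(p (Fin.last _), q) ∈ R) :
    BuilderWinsIn (cycleGraph 4) (pathGraph (n + 3)) R B 3 := by
  obtain ⟨x, hx⟩ := ((Set.finite_range p).insert q).exists_notMem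
  obtain ⟨hxq, hxp⟩ : x ≠ q ∧ x ∉ Set.range p := by
    simpa only [Set.mem_insert_iff, not_or] using hx
  have hq_ne (i) : p i ≠ q := fun h ↦ hq ⟨i, h⟩
  have hx_ne (i) : p i ≠ x := fun h ↦ hxp ⟨i, h⟩
  have hends : p (Fin.last _) ≠ p 0 := hp.injective.ne Fin.last_pos.ne'
  refine .of_forced_red (hq_ne 0) (hp.cons hq).hasCopy ?_
  refine .of_forced_red (hx_ne 0) (hp.cons hxp).hasCopy ?_
  refine .of_red_path (p (Fin.last _)) q (p 0) x ?_ ?_ ?_ ?_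
    (hp.snoc hxp).hasCopy.builderWinsIn_of_blue
  · simp [hq_ne, hx_ne, hends, hxq.symm, (hq_ne _).symm]
  · simp [hred]
  · simp [Sym2.eq_swap]
  · simp

theorem IsPathIn.builderWinsIn_four (hp : IsPathIn B p) :
    BuilderWinsIn (cycleGraph 4) (pathGraph (n + 3)) R B 4 := by
  obtain ⟨q, hq⟩ := (Set.finite_range p).exists_notMem
  exact .of_forced_red (fun h ↦ hq ⟨_, h⟩) (hp.snoc hq).hasCopy
    (hp.builderWinsIn_three_of_red_pendant hq (Set.mem_insert _ _))

end Forcing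

section CaseR9

variable {v : Fin 6 → ℕ}

theorem builderWinsIn_R9_insert_red (hv : Function.Injective v) :
    BuilderWinsIn (cycleGraph 4) (pathGraph 6)
      (insert s(v 0, v 4) {s(v 0, v 1), s(v 2, v 3), s(v 4, v 5)})
      {s(v 1, v 2), s(v 3, v 4)} 5 := by
  refine .of_red_path (v 1) (v 0) (v 4) (v 5)
    (by simp [hv.eq_iff]) (by simp) (by simp) (by simp) ?_
  refine .of_edge (a := v 3) (b := v 5) (hv.ne (by decide)) ?red ?blue
  case red =>
    refine .of_red_path (v 0) (v 4) (v 5) (v 3)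
      (by simp [hv.eq_iff]) (by simp) (by simp) (by simp) ?_
    refine .of_red_path (v 2) (v 3) (v 5) (v 4)
      (by simp [hv.eq_iff]) (by simp) (by simp) (by simp) ?_
    refine (IsPathIn.hasCopy (p := v ∘ ![0, 3, 4, 2, 1, 5]) ?_).builderWinsIn_of_blue
    exact ⟨hv.comp (by decide), by simp [Fin.forall_fin_succ]⟩
  case blue =>
    refine IsPathIn.builderWinsIn_three_of_red_pendant (p := v ∘ ![2, 1, 5, 3, 4])
      (q := v 0) ?_ ?_ ?_
    · exact ⟨hv.comp (by decide), by simp [Fin.forall_fin_succ]⟩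
    · simp [hv.eq_iff, Fin.forall_fin_succ]
    · simp

theorem builderWinsIn_R9_insert_blue (hv : Function.Injective v) :
    BuilderWinsIn (cycleGraph 4) (pathGraph 6)
      {s(v 0, v 1), s(v 2, v 3), s(v 4, v 5)}
      (insert s(v 0, v 4) {s(v 1, v 2), s(v 3, v 4)}) 5 := by
  refine .of_edge (a := v 0) (b := v 2) (hv.ne (by decide)) ?red ?blue
  case red =>
    refine .of_red_path (v 1) (v 0) (v 2) (v 3)
      (by simp [hv.eq_iff]) (by simp) (by simp) (by simp) ?_
    refine .of_forced_red (a := v 0) (b := v 5) (hv.ne (by decide))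
      (IsPathIn.snoc (p := v ∘ ![2, 1, 3, 4, 0]) ?_ ?_).hasCopy ?_
    · exact ⟨hv.comp (by decide), by simp [Fin.forall_fin_succ]⟩
    · simp [hv.eq_iff, Fin.forall_fin_succ]
    refine .of_red_path (v 2) (v 0) (v 5) (v 4)
      (by simp [hv.eq_iff]) (by simp) (by simp) (by simp) ?_
    refine .of_red_path (v 3) (v 2) (v 0) (v 5)
      (by simp [hv.eq_iff]) (by simp) (by simp) (by simp) ?_
    refine (IsPathIn.hasCopy (p := v ∘ ![0, 4, 2, 1, 3, 5]) ?_).builderWinsIn_of_blue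
    exact ⟨hv.comp (by decide), by simp [Fin.forall_fin_succ]⟩
  case blue =>
    refine IsPathIn.builderWinsIn_four (p := v ∘ ![1, 2, 0, 4, 3]) ?_
    exact ⟨hv.comp (by decide), by simp [Fin.forall_fin_succ]⟩

end CaseR9

/-- Case `R9`: in the online Ramsey game with targets red `C₄` and blue `P₆`,
from the position in which the five edges `v₁v₂, v₂v₃, v₃v₄, v₄v₅, v₅v₆` of a path on
six distinct vertices have been colored red, blue, red, blue, red respectively,
Builder can force a red copy of `C₄` or a blue copy of `P₆` within at most 6 additional
rounds (so within at most 11 rounds in total). -/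
theorem builder_wins_case_R9 (v : Fin 6 → ℕ) (hv : Function.Injective v) :
    BuilderWinsIn (cycleGraph 4) (pathGraph 6)
      {s(v 0, v 1), s(v 2, v 3), s(v 4, v 5)}
      {s(v 1, v 2), s(v 3, v 4)} 6 := by
  exact .of_edge (hv.ne (by decide : (0 : Fin 6) ≠ 4))
    (builderWinsIn_R9_insert_red hv) (builderWinsIn_R9_insert_blue hv)
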